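/- arXiv:1810.07327 — 2 statements merged into one kernel-verified Lean document; each statement's English description precedes it below -/
import Mathlib

section
/- Let σ ≥ 1 and γ = (σ-1)/2. For f in the Schwartz class on ℝ, define F(t,x) = ∫_ℝ |ξ|^γ e^{-it|ξ|^σ} f̂(ξ) e^{ixξ} dξ. Then sup_{x∈ℝ} ‖F(·,x)‖_{L²_t(ℝ)} ≲ ‖f‖_{L²(ℝ)}, with implicit constant depending only on σ. -/
open MeasureTheory Complex

/-- Fourier transform with the convention `f̂(ξ) = ∫ f(x) e^{-ixξ} dx`. -/
noncomputable def fourierT (f : ℝ → ℂ) (ξ : ℝ) : ℂ :=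
  ∫ x : ℝ, f x * Complex.exp (-(Complex.I * (x : ℂ) * (ξ : ℂ)))

/-!
For fixed `x`, substituting `y = |ξ|^σ` on a half-line turns `F(·, x)` into a Fourier transform
in `y`, and the weight `|ξ|^((σ-1)/2)` is, up to the constant `√|σ|`, the square root of the
Jacobian, so the substitution preserves `L²` norms. The frequencies `ξ` and `-ξ` have the same
phase; folding the line onto the half-line costs a factor `2` in the squared norm. Plancherel in
`t` and then in `x` concludes.
-/

open scoped FourierTransform SchwartzMap ContDiff

section Plancherel

variable {V H : Type*} [NormedAddCommGroup V] [InnerProductSpace ℝ V] [FiniteDimensional ℝ V]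
  [MeasurableSpace V] [BorelSpace V] [NormedAddCommGroup H] {g : V → H}

section NormedSpace

variable [NormedSpace ℂ H]

theorem continuous_fourier_of_integrable (hg : Integrable g) : Continuous (𝓕 g) :=
  VectorFourier.fourierIntegral_continuous Real.continuous_fourierChar
    (L := innerₗ V) continuous_inner hg

theorem integral_schwartz_smul_fourier_eq [CompleteSpace H] (ψ : 𝓢(V, ℂ)) (hg : Integrable g) :
    ∫ ξ, ψ ξ • 𝓕 g ξ = ∫ x, 𝓕 ψ x • g x := by
  rw [SchwartzMap.fourier_coe]
  simpa using! (VectorFourier.integral_fourierIntegral_smul_eq_flip (L := innerₗ V)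
    Real.continuous_fourierChar continuous_inner ψ.integrable hg).symm

end NormedSpace

variable [InnerProductSpace ℂ H] [CompleteSpace H]

theorem integral_schwartz_smul_fourier_toLp_eq (ψ : 𝓢(V, ℂ)) (hg : MemLp g 2) :
    ∫ ξ, ψ ξ • (𝓕 (hg.toLp g) : Lp H 2) ξ = ∫ x, 𝓕 ψ x • g x := by
  have hdistrib := congrArg (fun T : TemperedDistribution V H ↦ T ψ)
    (Lp.fourier_toTemperedDistribution_eq (hg.toLp g))
  simp only [TemperedDistribution.fourier_apply, Lp.toTemperedDistribution_apply] at hdistrib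
  rw [← hdistrib]
  refine integral_congr_ae ?_
  filter_upwards [hg.coeFn_toLp] with x hx
  rw [hx]

theorem fourier_ae_eq_fourier_toLp (hg₁ : Integrable g) (hg₂ : MemLp g 2) :
    𝓕 g =ᵐ[volume] (𝓕 (hg₂.toLp g) : Lp H 2) := by
  refine ae_eq_of_integral_contDiff_smul_eq
    (continuous_fourier_of_integrable hg₁).locallyIntegrable
    ((Lp.memLp _).locallyIntegrable (by norm_num)) fun φ hφ hφ_supp ↦ ?_
  have hψ_supp : HasCompactSupport (Complex.ofRealCLM ∘ φ) := hφ_supp.comp_left rfl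
  have hψ : ContDiff ℝ ∞ (Complex.ofRealCLM ∘ φ) := by fun_prop
  simpa using (integral_schwartz_smul_fourier_eq (hψ_supp.toSchwartzMap hψ) hg₁).trans
    (integral_schwartz_smul_fourier_toLp_eq (hψ_supp.toSchwartzMap hψ) hg₂).symm

theorem memLp_two_fourier (hg₁ : Integrable g) (hg₂ : MemLp g 2) : MemLp (𝓕 g) 2 :=
  (Lp.memLp _).ae_eq (fourier_ae_eq_fourier_toLp hg₁ hg₂).symm

theorem eLpNorm_two_fourier (hg₁ : Integrable g) (hg₂ : MemLp g 2) :
    eLpNorm (𝓕 g) 2 = eLpNorm g 2 := by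
  rw [eLpNorm_congr_ae (fourier_ae_eq_fourier_toLp hg₁ hg₂), ← Lp.enorm_def,
    ← Lp.enorm_toLp hg₂, ← ofReal_norm, ← ofReal_norm, Lp.norm_fourier_eq]

theorem integral_norm_sq_eq_lpNorm_sq {α E : Type*} [MeasurableSpace α] {μ : Measure α}
    [NormedAddCommGroup E] {h : α → E} (hh : AEStronglyMeasurable h μ) :
    ∫ x, ‖h x‖ ^ 2 ∂μ = lpNorm h 2 μ ^ 2 := by
  rw [lpNorm_eq_integral_norm_rpow_toReal two_ne_zero ENNReal.ofNat_ne_top hh]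
  have hnonneg : 0 ≤ ∫ x, ‖h x‖ ^ 2 ∂μ := integral_nonneg fun _ ↦ by positivity
  simp [← Real.sqrt_eq_rpow, ← one_div, Real.sq_sqrt hnonneg]

theorem integral_norm_sq_fourier_eq (hg₁ : Integrable g) (hg₂ : MemLp g 2) :
    ∫ ξ, ‖𝓕 g ξ‖ ^ 2 = ∫ x, ‖g x‖ ^ 2 := by
  have hFg := (memLp_two_fourier hg₁ hg₂).aestronglyMeasurable
  rw [integral_norm_sq_eq_lpNorm_sq hFg, integral_norm_sq_eq_lpNorm_sq hg₂.aestronglyMeasurable,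
    ← toReal_eLpNorm hFg, ← toReal_eLpNorm hg₂.aestronglyMeasurable,
    eLpNorm_two_fourier hg₁ hg₂]

end Plancherel

section FourierT

theorem fourierT_eq_fourier (f : ℝ → ℂ) (ξ : ℝ) : fourierT f ξ = 𝓕 f (ξ / (2 * Real.pi)) := by
  rw [fourierT, Real.fourier_real_eq_integral_exp_smul]
  refine integral_congr_ae (ae_of_all _ fun x ↦ ?_)
  have hphase : ((-2 * Real.pi * x * (ξ / (2 * Real.pi)) : ℝ) : ℂ) * I = -(I * x * ξ) := by
    have : (Real.pi : ℂ) ≠ 0 := by exact_mod_cast Real.pi_ne_zero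
    push_cast
    field_simp
  simp only [hphase, smul_eq_mul]
  exact mul_comm _ _

variable {f : ℝ → ℂ}

theorem continuous_fourierT (hf : Integrable f) : Continuous (fourierT f) := by
  simp only [funext (fourierT_eq_fourier f)]
  exact (continuous_fourier_of_integrable hf).comp (continuous_id.div_const _)

theorem memLp_two_fourierT (hf₁ : Integrable f) (hf₂ : MemLp f 2) : MemLp (fourierT f) 2 := by
  rw [memLp_two_iff_integrable_sq_norm (continuous_fourierT hf₁).aestronglyMeasurable]
  simp only [fourierT_eq_fourier]
  exact ((memLp_two_fourier hf₁ hf₂).integrable_norm_pow two_ne_zero).comp_div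
    Real.two_pi_pos.ne'

theorem integral_norm_sq_fourierT (hf₁ : Integrable f) (hf₂ : MemLp f 2) :
    ∫ ξ, ‖fourierT f ξ‖ ^ 2 = 2 * Real.pi * ∫ x, ‖f x‖ ^ 2 := by
  simp only [fourierT_eq_fourier]
  rw [Measure.integral_comp_div (fun ξ ↦ ‖𝓕 f ξ‖ ^ 2), integral_norm_sq_fourier_eq hf₁ hf₂,
    abs_of_pos Real.two_pi_pos, smul_eq_mul]

end FourierT

section ChangeOfPhase

variable {S : Set ℝ} {φ φ' : ℝ → ℝ} {u : ℝ → ℂ}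

/-- Transport of `u`, viewed as a half-density on `S`, along an injective phase `φ` with
derivative `φ'`: the function `|φ'|^{-1/2} u` read in the coordinate `y = φ(ξ)`, extended by zero
off `φ(S)`. Its Fourier transform is an oscillatory integral over `S` with phase `φ`. -/
noncomputable def halfDensityMap (S : Set ℝ) (φ φ' : ℝ → ℝ) (u : ℝ → ℂ) : ℝ → ℂ :=
  (φ '' S).indicator fun y ↦
    (√|φ' (Function.invFunOn φ S y)|)⁻¹ • u (Function.invFunOn φ S y)

theorem halfDensityMap_apply (hφ : S.InjOn φ) {ξ : ℝ} (hξ : ξ ∈ S) :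
    halfDensityMap S φ φ' u (φ ξ) = (√|φ' ξ|)⁻¹ • u ξ := by
  rw [halfDensityMap, Set.indicator_of_mem (Set.mem_image_of_mem φ hξ),
    hφ.leftInvOn_invFunOn hξ]

theorem abs_deriv_smul_halfDensityMap (hφ : S.InjOn φ) {ξ : ℝ} (hξ : ξ ∈ S) :
    |φ' ξ| • halfDensityMap S φ φ' u (φ ξ) = (√|φ' ξ| : ℝ) * u ξ := by
  rw [halfDensityMap_apply hφ hξ, smul_smul, ← div_eq_mul_inv, Real.div_sqrt, Complex.real_smul]

theorem abs_deriv_smul_norm_sq_halfDensityMap (hφ : S.InjOn φ) {ξ : ℝ} (hξ : ξ ∈ S)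
    (hφ' : φ' ξ ≠ 0) : |φ' ξ| • ‖halfDensityMap S φ φ' u (φ ξ)‖ ^ 2 = ‖u ξ‖ ^ 2 := by
  rw [halfDensityMap_apply hφ hξ, norm_smul, mul_pow, norm_inv, inv_pow, Real.norm_eq_abs, sq_abs,
    Real.sq_sqrt (abs_nonneg _), smul_eq_mul, mul_inv_cancel_left₀ (abs_ne_zero.2 hφ')]

theorem norm_sq_halfDensityMap_eq_indicator :
    (fun y ↦ ‖halfDensityMap S φ φ' u y‖ ^ 2) =
      (φ '' S).indicator fun y ↦ ‖halfDensityMap S φ φ' u y‖ ^ 2 := by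
  refine (Set.indicator_eq_self.2 fun y hy ↦ ?_).symm
  by_contra hyS
  exact hy (by simp [halfDensityMap, hyS])

variable (hS : MeasurableSet S) (hderiv : ∀ ξ ∈ S, HasDerivWithinAt φ (φ' ξ) S ξ)
  (hφ : S.InjOn φ)

include hS hderiv hφ

theorem measurableSet_image_of_hasDerivWithinAt : MeasurableSet (φ '' S) :=
  hS.image_of_continuousOn_injOn (fun ξ hξ ↦ (hderiv ξ hξ).continuousWithinAt) hφ

theorem integrable_halfDensityMap
    (hint : IntegrableOn (fun ξ ↦ ((√|φ' ξ| : ℝ) : ℂ) * u ξ) S) :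
    Integrable (halfDensityMap S φ φ' u) := by
  refine IntegrableOn.integrable_of_forall_notMem_eq_zero (s := φ '' S) ?_
    fun y hy ↦ Set.indicator_of_notMem hy _
  rw [integrableOn_image_iff_integrableOn_abs_deriv_smul hS hderiv hφ]
  exact hint.congr_fun (fun ξ hξ ↦ (abs_deriv_smul_halfDensityMap hφ hξ).symm) hS

theorem fourierT_halfDensityMap (t : ℝ) :
    fourierT (halfDensityMap S φ φ' u) t =
      ∫ ξ in S, ((√|φ' ξ| : ℝ) : ℂ) * cexp (-(I * t * φ ξ)) * u ξ := by
  rw [fourierT, ← setIntegral_eq_integral_of_forall_compl_eq_zero (s := φ '' S)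
      fun y hy ↦ by rw [halfDensityMap, Set.indicator_of_notMem hy, zero_mul],
    integral_image_eq_integral_abs_deriv_smul hS hderiv hφ]
  refine setIntegral_congr_fun hS fun ξ hξ ↦ ?_
  simp only [← smul_mul_assoc, abs_deriv_smul_halfDensityMap hφ hξ, mul_right_comm _ (u ξ),
    mul_right_comm I (t : ℂ)]

variable (hφ' : ∀ ξ ∈ S, φ' ξ ≠ 0)

include hφ'

theorem integral_norm_sq_halfDensityMap :
    ∫ y, ‖halfDensityMap S φ φ' u y‖ ^ 2 = ∫ ξ in S, ‖u ξ‖ ^ 2 := by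
  rw [norm_sq_halfDensityMap_eq_indicator,
    integral_indicator (measurableSet_image_of_hasDerivWithinAt hS hderiv hφ),
    integral_image_eq_integral_abs_deriv_smul hS hderiv hφ]
  exact setIntegral_congr_fun hS fun ξ hξ ↦
    abs_deriv_smul_norm_sq_halfDensityMap hφ hξ (hφ' ξ hξ)

theorem memLp_two_halfDensityMap (hu : MemLp u 2 (volume.restrict S))
    (hint : IntegrableOn (fun ξ ↦ ((√|φ' ξ| : ℝ) : ℂ) * u ξ) S) :
    MemLp (halfDensityMap S φ φ' u) 2 := by
  rw [memLp_two_iff_integrable_sq_norm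
      (integrable_halfDensityMap hS hderiv hφ hint).aestronglyMeasurable,
    norm_sq_halfDensityMap_eq_indicator,
    integrable_indicator_iff (measurableSet_image_of_hasDerivWithinAt hS hderiv hφ),
    integrableOn_image_iff_integrableOn_abs_deriv_smul hS hderiv hφ]
  have hsq : IntegrableOn (fun ξ ↦ ‖u ξ‖ ^ 2) S := hu.integrable_norm_pow two_ne_zero
  exact hsq.congr_fun
    (fun ξ hξ ↦ (abs_deriv_smul_norm_sq_halfDensityMap hφ hξ (hφ' ξ hξ)).symm) hS

theorem integral_norm_sq_oscillatory_eq (hu : MemLp u 2 (volume.restrict S))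
    (hint : IntegrableOn (fun ξ ↦ ((√|φ' ξ| : ℝ) : ℂ) * u ξ) S) :
    ∫ t : ℝ, ‖∫ ξ in S, ((√|φ' ξ| : ℝ) : ℂ) * cexp (-(I * t * φ ξ)) * u ξ‖ ^ 2 =
      2 * Real.pi * ∫ ξ in S, ‖u ξ‖ ^ 2 := by
  simp only [← fourierT_halfDensityMap hS hderiv hφ]
  rw [integral_norm_sq_fourierT (integrable_halfDensityMap hS hderiv hφ hint)
      (memLp_two_halfDensityMap hS hderiv hφ hφ' hu hint),
    integral_norm_sq_halfDensityMap hS hderiv hφ hφ']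

end ChangeOfPhase

section Folding

variable {E : Type*} [NormedAddCommGroup E]

theorem integral_eq_setIntegral_Ioi_add_comp_neg [NormedSpace ℝ E] {v : ℝ → E}
    (hv : Integrable v) : ∫ ξ, v ξ = ∫ ξ in Set.Ioi 0, (v ξ + v (-ξ)) := by
  rw [integral_add hv.integrableOn hv.comp_neg.integrableOn, integral_comp_neg_Ioi, neg_zero,
    add_comm, intervalIntegral.integral_Iic_add_Ioi hv.integrableOn hv.integrableOn]

theorem memLp_add_comp_neg {v : ℝ → E} {p : ENNReal} (hv : MemLp v p) :
    MemLp (fun ξ ↦ v ξ + v (-ξ)) p :=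
  hv.add (hv.comp_measurePreserving (Measure.measurePreserving_neg volume))

theorem setIntegral_Ioi_norm_sq_add_comp_neg_le {v : ℝ → E} (hv : MemLp v 2) :
    ∫ ξ in Set.Ioi 0, ‖v ξ + v (-ξ)‖ ^ 2 ≤ 2 * ∫ ξ, ‖v ξ‖ ^ 2 := by
  have hsq : Integrable fun ξ ↦ ‖v ξ‖ ^ 2 := hv.integrable_norm_pow two_ne_zero
  rw [integral_eq_setIntegral_Ioi_add_comp_neg hsq, ← integral_const_mul]
  refine setIntegral_mono ((memLp_add_comp_neg hv).integrable_norm_pow two_ne_zero).integrableOn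
    ((hsq.add hsq.comp_neg).const_mul 2).integrableOn fun ξ ↦ ?_
  calc ‖v ξ + v (-ξ)‖ ^ 2 ≤ (‖v ξ‖ + ‖v (-ξ)‖) ^ 2 := by gcongr; exact norm_add_le _ _
    _ ≤ 2 * (‖v ξ‖ ^ 2 + ‖v (-ξ)‖ ^ 2) := add_sq_le

end Folding

section LocalSmoothing

variable {σ : ℝ} {u : ℝ → ℂ}

/-- The propagator `e^{-it|∇|^σ}` with its gain of `(σ-1)/2` derivatives, evaluated at a point in
space: `u` is the product of the Fourier transform of the datum with the plane wave at that
point. -/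
noncomputable def smoothedPropagator (σ : ℝ) (u : ℝ → ℂ) (t : ℝ) : ℂ :=
  ∫ ξ : ℝ, ((|ξ| ^ ((σ - 1) / 2) : ℝ) : ℂ) * cexp (-(I * t * ((|ξ| ^ σ : ℝ) : ℂ))) * u ξ

theorem sqrt_abs_mul_rpow_sub_one (σ : ℝ) {ξ : ℝ} (hξ : 0 < ξ) :
    √|σ * ξ ^ (σ - 1)| = √|σ| * ξ ^ ((σ - 1) / 2) := by
  rw [abs_mul, Real.sqrt_mul (abs_nonneg σ), abs_of_pos (Real.rpow_pos_of_pos hξ _),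
    Real.sqrt_eq_rpow (ξ ^ (σ - 1)), ← Real.rpow_mul hξ.le, mul_one_div]

theorem integral_norm_sq_rpow_phase_eq (hσ : σ ≠ 0) (hu : MemLp u 2 (volume.restrict (Set.Ioi 0)))
    (hint : IntegrableOn (fun ξ ↦ ((ξ ^ ((σ - 1) / 2) : ℝ) : ℂ) * u ξ) (Set.Ioi 0)) :
    ∫ t : ℝ, ‖∫ ξ in Set.Ioi (0 : ℝ), ((ξ ^ ((σ - 1) / 2) : ℝ) : ℂ)
        * cexp (-(I * t * ((ξ ^ σ : ℝ) : ℂ))) * u ξ‖ ^ 2 =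
      2 * Real.pi / |σ| * ∫ ξ in Set.Ioi 0, ‖u ξ‖ ^ 2 := by
  have hderiv : ∀ ξ ∈ Set.Ioi (0 : ℝ),
      HasDerivWithinAt (· ^ σ) (σ * ξ ^ (σ - 1)) (Set.Ioi 0) ξ := fun ξ hξ ↦
    (Real.hasDerivAt_rpow_const (Or.inl (ne_of_gt hξ))).hasDerivWithinAt
  have hinj : (Set.Ioi (0 : ℝ)).InjOn (· ^ σ) :=
    (Real.rpow_left_injOn hσ).mono Set.Ioi_subset_Ici_self
  have hderiv_ne : ∀ ξ ∈ Set.Ioi (0 : ℝ), σ * ξ ^ (σ - 1) ≠ 0 := fun ξ hξ ↦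
    mul_ne_zero hσ (Real.rpow_pos_of_pos hξ _).ne'
  have hweight : ∀ ξ ∈ Set.Ioi (0 : ℝ), ((√|σ * ξ ^ (σ - 1)| : ℝ) : ℂ) =
      (√|σ| : ℝ) * (ξ ^ ((σ - 1) / 2) : ℝ) := fun ξ hξ ↦ by
    rw [sqrt_abs_mul_rpow_sub_one σ hξ, Complex.ofReal_mul]
  have hint' : IntegrableOn (fun ξ ↦ ((√|σ * ξ ^ (σ - 1)| : ℝ) : ℂ) * u ξ) (Set.Ioi 0) :=
    IntegrableOn.congr_fun (hint.const_mul ((√|σ| : ℝ) : ℂ))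
      (fun ξ hξ ↦ by simp only [hweight ξ hξ, mul_assoc]) measurableSet_Ioi
  have hidentity :=
    integral_norm_sq_oscillatory_eq measurableSet_Ioi hderiv hinj hderiv_ne hu hint'
  have hscale : ∀ t : ℝ,
      ∫ ξ in Set.Ioi (0 : ℝ), ((√|σ * ξ ^ (σ - 1)| : ℝ) : ℂ)
        * cexp (-(I * t * ((ξ ^ σ : ℝ) : ℂ))) * u ξ =
      (√|σ| : ℝ) * ∫ ξ in Set.Ioi (0 : ℝ), ((ξ ^ ((σ - 1) / 2) : ℝ) : ℂ)
        * cexp (-(I * t * ((ξ ^ σ : ℝ) : ℂ))) * u ξ := fun t ↦ by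
    rw [← integral_const_mul]
    exact setIntegral_congr_fun measurableSet_Ioi fun ξ hξ ↦ by
      simp only [hweight ξ hξ, mul_assoc]
  simp only [hscale, norm_mul, mul_pow, integral_const_mul, Complex.norm_real, Real.norm_eq_abs,
    sq_abs, Real.sq_sqrt (abs_nonneg σ)] at hidentity
  rw [div_mul_eq_mul_div, eq_div_iff (abs_ne_zero.2 hσ), ← hidentity, mul_comm]

theorem smoothedPropagator_eq_setIntegral_Ioi
    (hint : Integrable fun ξ ↦ ((|ξ| ^ ((σ - 1) / 2) : ℝ) : ℂ) * u ξ) (t : ℝ) :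
    smoothedPropagator σ u t =
      ∫ ξ in Set.Ioi (0 : ℝ), ((ξ ^ ((σ - 1) / 2) : ℝ) : ℂ)
        * cexp (-(I * t * ((ξ ^ σ : ℝ) : ℂ))) * (u ξ + u (-ξ)) := by
  have hphase : Integrable fun ξ : ℝ ↦ ((|ξ| ^ ((σ - 1) / 2) : ℝ) : ℂ)
      * cexp (-(I * t * ((|ξ| ^ σ : ℝ) : ℂ))) * u ξ := by
    have hmeas : Measurable fun ξ : ℝ ↦ cexp (-(I * t * ((|ξ| ^ σ : ℝ) : ℂ))) := by fun_prop
    have hunimodular (ξ : ℝ) : ‖cexp (-(I * t * ((|ξ| ^ σ : ℝ) : ℂ)))‖ ≤ 1 := by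
      simp [Complex.norm_exp]
    exact (hint.bdd_mul hmeas.aestronglyMeasurable (ae_of_all _ hunimodular)).congr
      (ae_of_all _ fun ξ ↦ by ring)
  rw [smoothedPropagator, integral_eq_setIntegral_Ioi_add_comp_neg hphase]
  refine setIntegral_congr_fun measurableSet_Ioi fun ξ hξ ↦ ?_
  simp only [abs_neg, abs_of_pos (Set.mem_Ioi.1 hξ), mul_add]

theorem integral_norm_sq_smoothedPropagator_le (hσ : σ ≠ 0) (hu : MemLp u 2)
    (hint : Integrable fun ξ ↦ ((|ξ| ^ ((σ - 1) / 2) : ℝ) : ℂ) * u ξ) :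
    ∫ t, ‖smoothedPropagator σ u t‖ ^ 2 ≤ 4 * Real.pi / |σ| * ∫ ξ, ‖u ξ‖ ^ 2 := by
  have hfold : IntegrableOn
      (fun ξ ↦ ((ξ ^ ((σ - 1) / 2) : ℝ) : ℂ) * (u ξ + u (-ξ))) (Set.Ioi 0) :=
    (hint.add hint.comp_neg).integrableOn.congr_fun (fun ξ hξ ↦ by
      simp only [Pi.add_apply, abs_neg, abs_of_pos (Set.mem_Ioi.1 hξ), mul_add]) measurableSet_Ioi
  simp only [smoothedPropagator_eq_setIntegral_Ioi hint]
  calc _ = 2 * Real.pi / |σ| * ∫ ξ in Set.Ioi 0, ‖u ξ + u (-ξ)‖ ^ 2 :=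
        integral_norm_sq_rpow_phase_eq hσ ((memLp_add_comp_neg hu).restrict _) hfold
    _ ≤ 2 * Real.pi / |σ| * (2 * ∫ ξ, ‖u ξ‖ ^ 2) := by
        gcongr
        exact setIntegral_Ioi_norm_sq_add_comp_neg_le hu
    _ = 4 * Real.pi / |σ| * ∫ ξ, ‖u ξ‖ ^ 2 := by ring

end LocalSmoothing

section SchwartzWeight

theorem integrable_norm_rpow_smul_schwartz {E F : Type*} [NormedAddCommGroup E] [NormedSpace ℝ E]
    [FiniteDimensional ℝ E] [Nontrivial E] [MeasurableSpace E] [BorelSpace E]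
    [NormedAddCommGroup F] [NormedSpace ℝ F] (μ : Measure E) [μ.IsAddHaarMeasure] {a : ℝ}
    (ha : -Module.finrank ℝ E < a) (f : 𝓢(E, F)) : Integrable (fun x ↦ ‖x‖ ^ a • f x) μ := by
  have hmeas : AEStronglyMeasurable (fun x ↦ ‖x‖ ^ a • f x) μ :=
    (measurable_norm.pow_const a).aestronglyMeasurable.smul f.continuous.aestronglyMeasurable
  have hnorm : ∀ x, ‖‖x‖ ^ a • f x‖ = ‖x‖ ^ a * ‖f x‖ := fun x ↦ by
    rw [norm_smul, Real.norm_of_nonneg (by positivity)]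
  obtain ⟨C, -, hC⟩ := f.decay 0 0
  have hball : IntegrableOn (fun x ↦ ‖x‖ ^ a • f x) (Metric.ball 0 1) μ := by
    refine integrableOn_ball_of_norm_le_rpow (C := C) Module.finrank_pos (neg_lt.1 ha)
      (ae_of_all _ fun x ↦ ?_) hmeas
    rw [hnorm, neg_neg, mul_comm]
    gcongr
    simpa using hC x
  have hcompl : IntegrableOn (fun x ↦ ‖x‖ ^ a • f x) (Metric.ball 0 1)ᶜ μ := by
    refine (f.integrable_pow_mul μ ⌈a⌉₊).integrableOn.mono' hmeas.restrict
      (ae_restrict_of_forall_mem Metric.isOpen_ball.measurableSet.compl fun x hx ↦ ?_)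
    have hx : 1 ≤ ‖x‖ := by simpa using hx
    rw [hnorm, ← Real.rpow_natCast]
    gcongr
    exact Nat.le_ceil a
  rw [← integrableOn_univ, ← Set.union_compl_self (Metric.ball (0 : E) 1)]
  exact hball.union hcompl

theorem integrable_abs_rpow_mul_fourierT {a : ℝ} (ha : -1 < a) (f : 𝓢(ℝ, ℂ)) :
    Integrable fun ξ ↦ ((|ξ| ^ a : ℝ) : ℂ) * fourierT f ξ := by
  have hweight : Integrable fun ξ : ℝ ↦ ‖ξ‖ ^ a • 𝓕 f ξ :=
    integrable_norm_rpow_smul_schwartz volume (by simpa using ha) (𝓕 f)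
  have hscaled := (hweight.comp_div Real.two_pi_pos.ne').const_mul (((2 * Real.pi) ^ a : ℝ) : ℂ)
  refine hscaled.congr (ae_of_all _ fun ξ ↦ ?_)
  have hpi : (2 * Real.pi) ^ a ≠ 0 := (Real.rpow_pos_of_pos Real.two_pi_pos a).ne'
  simp only [fourierT_eq_fourier, SchwartzMap.fourier_coe, Real.norm_eq_abs, abs_div,
    abs_of_pos Real.two_pi_pos, Real.div_rpow (abs_nonneg ξ) Real.two_pi_pos.le,
    Complex.real_smul]
  rw [← mul_assoc, ← Complex.ofReal_mul, mul_div_cancel₀ _ hpi]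

end SchwartzWeight

theorem stmt0_general {σ : ℝ} (hσ : σ ≠ 0) {f : ℝ → ℂ} (hf₁ : Integrable f) (hf₂ : MemLp f 2)
    (hint : Integrable fun ξ ↦ ((|ξ| ^ ((σ - 1) / 2) : ℝ) : ℂ) * fourierT f ξ) (x : ℝ) :
    (∫ t : ℝ, ‖∫ ξ : ℝ, ((|ξ| ^ ((σ - 1) / 2) : ℝ) : ℂ)
          * cexp (-(I * (t : ℂ) * ((|ξ| ^ σ : ℝ) : ℂ)))
          * fourierT f ξ
          * cexp (I * (x : ℂ) * (ξ : ℂ))‖ ^ 2) ^ ((1 : ℝ) / 2)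
      ≤ (8 * Real.pi ^ 2 / |σ|) ^ ((1 : ℝ) / 2) * (∫ y : ℝ, ‖f y‖ ^ 2) ^ ((1 : ℝ) / 2) := by
  let u : ℝ → ℂ := fun ξ ↦ fourierT f ξ * cexp (I * x * ξ)
  have hunimodular (ξ : ℝ) : ‖cexp (I * x * ξ)‖ = 1 := by simp [Complex.norm_exp]
  have hnorm (ξ : ℝ) : ‖u ξ‖ = ‖fourierT f ξ‖ := by rw [norm_mul, hunimodular, mul_one]
  have hwave : Continuous fun ξ : ℝ ↦ cexp (I * x * ξ) := by fun_prop
  have hu : MemLp u 2 := (memLp_two_fourierT hf₁ hf₂).congr_norm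
    ((continuous_fourierT hf₁).mul hwave).aestronglyMeasurable
    (ae_of_all _ fun ξ ↦ (hnorm ξ).symm)
  have hu_int : Integrable fun ξ ↦ ((|ξ| ^ ((σ - 1) / 2) : ℝ) : ℂ) * u ξ :=
    (hint.mul_bdd hwave.aestronglyMeasurable (ae_of_all _ fun ξ ↦ (hunimodular ξ).le)).congr
      (ae_of_all _ fun ξ ↦ mul_assoc _ _ _)
  have hsq := integral_norm_sq_smoothedPropagator_le hσ hu hu_int
  simp only [hnorm, integral_norm_sq_fourierT hf₁ hf₂, smoothedPropagator, u, ← mul_assoc] at hsq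
  rw [← Real.mul_rpow (by positivity) (integral_nonneg fun _ ↦ by positivity)]
  refine Real.rpow_le_rpow (integral_nonneg fun _ ↦ by positivity) (hsq.trans_eq ?_) (by norm_num)
  ring

/-- Kenig–Ponce–Vega local smoothing: for `σ ≥ 1`, `γ = (σ-1)/2`,
`sup_x ‖F(·,x)‖_{L²_t} ≲ ‖f‖_{L²}`. -/
theorem stmt0 (σ : ℝ) (hσ : 1 ≤ σ) :
    ∃ C : ℝ, 0 < C ∧ ∀ f : SchwartzMap ℝ ℂ, ∀ x : ℝ,
      (∫ t : ℝ, ‖∫ ξ : ℝ, ((|ξ| ^ ((σ - 1) / 2) : ℝ) : ℂ)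
            * Complex.exp (-(Complex.I * (t : ℂ) * ((|ξ| ^ σ : ℝ) : ℂ)))
            * fourierT (fun y => f y) ξ
            * Complex.exp (Complex.I * (x : ℂ) * (ξ : ℂ))‖ ^ 2) ^ ((1:ℝ)/2)
        ≤ C * (∫ y : ℝ, ‖f y‖ ^ 2) ^ ((1:ℝ)/2) := by
  have hσ₀ : σ ≠ 0 := by positivity
  exact ⟨(8 * Real.pi ^ 2 / |σ|) ^ ((1 : ℝ) / 2), by positivity, fun f ↦
    stmt0_general hσ₀ f.integrable (f.memLp 2) (integrable_abs_rpow_mul_fourierT (by linarith) f)⟩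
end

section
/- Let β ∈ (1/2,1), α > 0, σ = α/β, M > 0 and s ∈ [0,1). Define the kernel 𝒰_1(x) = ∫_ℝ |ξ|^{-s} χ(ξ) E_β(i^{-β}|ξ|^α) e^{ixξ} dξ, where χ is a smooth cutoff supported in {|ξ|^σ ≤ 2M} equal to 1 on {|ξ|^σ ≤ M}, and E_β(z) = Σ_{k≥0} z^k/Γ(βk+1). Then |𝒰_1(x)| ≲_s |x|^{s-1} for all x ≠ 0. -/
open MeasureTheory Complex

/-- Mittag-Leffler function `E_β(z) = Σ_{k≥0} z^k/Γ(βk+1)`. -/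
noncomputable def mlE (β : ℝ) (z : ℂ) : ℂ :=
  ∑' k : ℕ, z ^ k / ((Real.Gamma (β * (k:ℝ) + 1) : ℝ) : ℂ)

/- Low frequencies `|ξ| ≤ |x|⁻¹` contribute at most a multiple of the integral of `|ξ| ^ (-s)` over
them, that is of `|x| ^ (s - 1)`. On high frequencies one integration by parts gains a factor
`|x|⁻¹`, and what remains is the total variation of `|ξ| ^ (-s) * g ξ` on `|x|⁻¹ ≤ |ξ|`, at most a
multiple of `|x| ^ s`, because the weight is monotone on each half-line and
`g ξ = χ ξ * E_β (c |ξ| ^ α)` has bounded variation: its derivative is singular only like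
`|ξ| ^ (α - 1)`, which is integrable at `0`. -/

section OscillatoryIntegral

variable {a b A s x : ℝ} {u u' g g' : ℝ → ℂ} {φ φ' : ℝ → ℝ}

lemma norm_exp_I_mul_mul (x ξ : ℝ) : ‖exp (I * x * ξ)‖ = 1 := by
  simpa [mul_assoc] using norm_exp_I_mul_ofReal (x * ξ)

lemma hasDerivAt_exp_I_mul_mul (x ξ : ℝ) :
    HasDerivAt (fun ξ : ℝ => exp (I * x * ξ)) (I * x * exp (I * x * ξ)) ξ := by
  have hlin : HasDerivAt (fun ξ : ℝ => I * x * (ξ : ℂ)) (I * x) ξ := by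
    simpa using (hasDerivAt_id ξ).ofReal_comp.const_mul (I * (x : ℂ))
  simpa only [mul_comm] using hlin.cexp

lemma abs_mul_norm_integral_mul_exp_le (hab : a ≤ b) (hu : ContinuousOn u (Set.Icc a b))
    (huu' : ∀ ξ ∈ Set.Ioo a b, HasDerivAt u (u' ξ) ξ) (hu' : IntervalIntegrable u' volume a b) :
    |x| * ‖∫ ξ in a..b, u ξ * exp (I * x * ξ)‖ ≤ ‖u a‖ + ‖u b‖ + ∫ ξ in a..b, ‖u' ξ‖ := by
  have by_parts : I * x * ∫ ξ in a..b, u ξ * exp (I * x * ξ) =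
      u b * exp (I * x * b) - u a * exp (I * x * a) - ∫ ξ in a..b, u' ξ * exp (I * x * ξ) := by
    have hcont : Continuous fun ξ : ℝ => exp (I * x * ξ) := by fun_prop
    rw [← intervalIntegral.integral_mul_deriv_eq_deriv_mul_of_hasDerivAt
      (by rwa [Set.uIcc_of_le hab]) hcont.continuousOn
      (by rwa [min_eq_left hab, max_eq_right hab]) (fun ξ _ => hasDerivAt_exp_I_mul_mul x ξ) hu'
      ((hcont.const_mul (I * (x : ℂ))).intervalIntegrable a b),
      ← intervalIntegral.integral_const_mul]
    exact intervalIntegral.integral_congr fun ξ _ => by ring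
  have hrest : ‖∫ ξ in a..b, u' ξ * exp (I * x * ξ)‖ ≤ ∫ ξ in a..b, ‖u' ξ‖ := by
    simpa only [norm_mul, norm_exp_I_mul_mul, mul_one] using
      intervalIntegral.norm_integral_le_integral_norm (μ := volume)
        (f := fun ξ => u' ξ * exp (I * x * ξ)) hab
  calc |x| * ‖∫ ξ in a..b, u ξ * exp (I * x * ξ)‖
      = ‖u b * exp (I * x * b) - u a * exp (I * x * a)
          - ∫ ξ in a..b, u' ξ * exp (I * x * ξ)‖ := by
        rw [← by_parts, norm_mul, norm_mul, norm_I, one_mul, norm_real, Real.norm_eq_abs]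
    _ ≤ ‖u b‖ + ‖u a‖ + ∫ ξ in a..b, ‖u' ξ‖ := by
        refine (norm_sub_le _ _).trans (add_le_add ((norm_sub_le _ _).trans_eq ?_) hrest)
        simp only [norm_mul, norm_exp_I_mul_mul, mul_one]
    _ = ‖u a‖ + ‖u b‖ + ∫ ξ in a..b, ‖u' ξ‖ := by rw [add_comm ‖u b‖]

lemma intervalIntegrable_deriv_of_nonpos (hab : a ≤ b) (hφ : ContinuousOn φ (Set.Icc a b))
    (hφφ' : ∀ ξ ∈ Set.Ioo a b, HasDerivAt φ (φ' ξ) ξ) (hφ' : ∀ ξ ∈ Set.Ioo a b, φ' ξ ≤ 0) :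
    IntervalIntegrable φ' volume a b := by
  have hneg : IntervalIntegrable (-φ') volume a b := by
    refine intervalIntegral.intervalIntegrable_deriv_of_nonneg (g := -φ) ?_ ?_ ?_
    · rw [Set.uIcc_of_le hab]
      exact hφ.neg
    · rw [min_eq_left hab, max_eq_right hab]
      exact fun ξ hξ => (hφφ' ξ hξ).neg
    · rw [min_eq_left hab, max_eq_right hab]
      exact fun ξ hξ => neg_nonneg.2 (hφ' ξ hξ)
  simpa only [neg_neg] using hneg.neg

lemma antitoneOn_Icc_of_hasDerivAt_nonpos (hφ : ContinuousOn φ (Set.Icc a b))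
    (hφφ' : ∀ ξ ∈ Set.Ioo a b, HasDerivAt φ (φ' ξ) ξ) (hφ' : ∀ ξ ∈ Set.Ioo a b, φ' ξ ≤ 0) :
    AntitoneOn φ (Set.Icc a b) := by
  rw [← interior_Icc] at hφφ' hφ'
  exact antitoneOn_of_hasDerivWithinAt_nonpos (convex_Icc a b) hφ
    (fun ξ hξ => (hφφ' ξ hξ).hasDerivWithinAt) hφ'

lemma intervalIntegrable_deriv_mul_add_mul_deriv (hab : a ≤ b) (hφ : ContinuousOn φ (Set.Icc a b))
    (hφ' : IntervalIntegrable φ' volume a b) (hg : ContinuousOn g (Set.Icc a b))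
    (hg' : IntervalIntegrable g' volume a b) :
    IntervalIntegrable (fun ξ => (φ' ξ : ℂ) * g ξ + φ ξ * g' ξ) volume a b := by
  rw [← Set.uIcc_of_le hab] at hφ hg
  have hφ'_ofReal : IntervalIntegrable (fun ξ => (φ' ξ : ℂ)) volume a b :=
    ⟨hφ'.1.ofReal, hφ'.2.ofReal⟩
  exact (hφ'_ofReal.mul_continuousOn hg).add
    (hg'.continuousOn_mul (continuous_ofReal.comp_continuousOn hφ))

lemma integral_norm_deriv_mul_le_of_nonpos (hab : a ≤ b)
    (hφ : ContinuousOn φ (Set.Icc a b)) (hφφ' : ∀ ξ ∈ Set.Ioo a b, HasDerivAt φ (φ' ξ) ξ)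
    (hφ' : ∀ ξ ∈ Set.Ioo a b, φ' ξ ≤ 0) (hφb : 0 ≤ φ b) (hg : ContinuousOn g (Set.Icc a b))
    (hg' : IntervalIntegrable g' volume a b) (hgA : ∀ ξ ∈ Set.Icc a b, ‖g ξ‖ ≤ A) :
    ∫ ξ in a..b, ‖(φ' ξ : ℂ) * g ξ + φ ξ * g' ξ‖ ≤
      A * (φ a - φ b) + φ a * ∫ ξ in a..b, ‖g' ξ‖ := by
  have hanti := antitoneOn_Icc_of_hasDerivAt_nonpos hφ hφφ' hφ'
  have hφ'_int := intervalIntegrable_deriv_of_nonpos hab hφ hφφ' hφ'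
  have hφ'_sum : ∫ ξ in a..b, φ' ξ = φ b - φ a :=
    intervalIntegral.integral_eq_sub_of_hasDerivAt_of_le hab hφ hφφ' hφ'_int
  have hbound : ∀ ξ ∈ Set.Ioo a b,
      ‖(φ' ξ : ℂ) * g ξ + φ ξ * g' ξ‖ ≤ -A * φ' ξ + φ a * ‖g' ξ‖ := fun ξ hξ => by
    have hξ' := Set.Ioo_subset_Icc_self hξ
    have hφξ : 0 ≤ φ ξ := hφb.trans (hanti hξ' (Set.right_mem_Icc.2 hab) hξ'.2)
    calc ‖(φ' ξ : ℂ) * g ξ + φ ξ * g' ξ‖ ≤ -φ' ξ * ‖g ξ‖ + φ ξ * ‖g' ξ‖ := by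
          refine (norm_add_le _ _).trans_eq ?_
          rw [norm_mul, norm_mul, norm_real, norm_real, Real.norm_of_nonpos (hφ' ξ hξ),
            Real.norm_of_nonneg hφξ]
      _ ≤ -φ' ξ * A + φ a * ‖g' ξ‖ := by
          gcongr
          · exact neg_nonneg.2 (hφ' ξ hξ)
          · exact hgA ξ hξ'
          · exact hanti (Set.left_mem_Icc.2 hab) hξ' hξ'.1
      _ = -A * φ' ξ + φ a * ‖g' ξ‖ := by ring
  have hd_int := intervalIntegrable_deriv_mul_add_mul_deriv hab hφ hφ'_int hg hg'
  calc ∫ ξ in a..b, ‖(φ' ξ : ℂ) * g ξ + φ ξ * g' ξ‖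
      ≤ ∫ ξ in a..b, (-A * φ' ξ + φ a * ‖g' ξ‖) :=
        intervalIntegral.integral_mono_on_of_le_Ioo hab hd_int.norm
          ((hφ'_int.const_mul _).add (hg'.norm.const_mul _)) hbound
    _ = A * (φ a - φ b) + φ a * ∫ ξ in a..b, ‖g' ξ‖ := by
        rw [intervalIntegral.integral_add (hφ'_int.const_mul _) (hg'.norm.const_mul _),
          intervalIntegral.integral_const_mul, intervalIntegral.integral_const_mul, hφ'_sum]
        ring

lemma abs_mul_norm_integral_weight_mul_exp_le (hab : a ≤ b)
    (hφ : ContinuousOn φ (Set.Icc a b)) (hφφ' : ∀ ξ ∈ Set.Ioo a b, HasDerivAt φ (φ' ξ) ξ)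
    (hφ' : ∀ ξ ∈ Set.Ioo a b, φ' ξ ≤ 0) (hφb : 0 ≤ φ b)
    (hg : ContinuousOn g (Set.Icc a b)) (hgg' : ∀ ξ ∈ Set.Ioo a b, HasDerivAt g (g' ξ) ξ)
    (hg' : IntervalIntegrable g' volume a b) (hgA : ∀ ξ ∈ Set.Icc a b, ‖g ξ‖ ≤ A) :
    |x| * ‖∫ ξ in a..b, φ ξ * g ξ * exp (I * x * ξ)‖ ≤
      φ a * (2 * A + ∫ ξ in a..b, ‖g' ξ‖) := by
  have ha : a ∈ Set.Icc a b := Set.left_mem_Icc.2 hab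
  have hb : b ∈ Set.Icc a b := Set.right_mem_Icc.2 hab
  have hφa : 0 ≤ φ a := hφb.trans (antitoneOn_Icc_of_hasDerivAt_nonpos hφ hφφ' hφ' ha hb hab)
  have hφ'_int := intervalIntegrable_deriv_of_nonpos hab hφ hφφ' hφ'
  calc |x| * ‖∫ ξ in a..b, φ ξ * g ξ * exp (I * x * ξ)‖
      ≤ ‖(φ a : ℂ) * g a‖ + ‖(φ b : ℂ) * g b‖ + ∫ ξ in a..b, ‖(φ' ξ : ℂ) * g ξ + φ ξ * g' ξ‖ :=
        abs_mul_norm_integral_mul_exp_le hab ((continuous_ofReal.comp_continuousOn hφ).mul hg)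
          (fun ξ hξ => (hφφ' ξ hξ).ofReal_comp.mul (hgg' ξ hξ))
          (intervalIntegrable_deriv_mul_add_mul_deriv hab hφ hφ'_int hg hg')
    _ ≤ φ a * A + φ b * A + (A * (φ a - φ b) + φ a * ∫ ξ in a..b, ‖g' ξ‖) := by
        rw [norm_mul, norm_mul, norm_real, norm_real, Real.norm_of_nonneg hφa,
          Real.norm_of_nonneg hφb]
        gcongr
        · exact hgA a ha
        · exact hgA b hb
        · exact integral_norm_deriv_mul_le_of_nonpos hab hφ hφφ' hφ' hφb hg hg' hgA
    _ = φ a * (2 * A + ∫ ξ in a..b, ‖g' ξ‖) := by ring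

lemma norm_integral_rpow_mul_le {p : ℝ} (hp : -1 < p) (hb : 0 ≤ b)
    (hA : ∀ ξ ∈ Set.Ioc 0 b, ‖u ξ‖ ≤ A) :
    ‖∫ ξ in (0 : ℝ)..b, ((ξ ^ p : ℝ) : ℂ) * u ξ‖ ≤ A / (p + 1) * b ^ (p + 1) := by
  have hbound : ∀ ξ ∈ Set.Ioc 0 b, ‖((ξ ^ p : ℝ) : ℂ) * u ξ‖ ≤ A * ξ ^ p := fun ξ hξ => by
    have hξp : 0 ≤ ξ ^ p := Real.rpow_nonneg hξ.1.le p
    rw [norm_mul, norm_real, Real.norm_of_nonneg hξp, mul_comm]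
    exact mul_le_mul_of_nonneg_right (hA ξ hξ) hξp
  calc ‖∫ ξ in (0 : ℝ)..b, ((ξ ^ p : ℝ) : ℂ) * u ξ‖
      ≤ ∫ ξ in (0 : ℝ)..b, A * ξ ^ p :=
        intervalIntegral.norm_integral_le_of_norm_le hb (.of_forall hbound)
          ((intervalIntegral.intervalIntegrable_rpow' hp).const_mul A)
    _ = A / (p + 1) * b ^ (p + 1) := by
        rw [intervalIntegral.integral_const_mul, integral_rpow (Or.inl hp),
          Real.zero_rpow (by linarith)]
        ring

lemma intervalIntegrable_rpow_neg_mul_mul_exp (hs1 : s < 1) (hb : 0 ≤ b)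
    (hg : ContinuousOn g (Set.Icc 0 b)) :
    IntervalIntegrable (fun ξ : ℝ => ((ξ ^ (-s) : ℝ) : ℂ) * g ξ * exp (I * x * ξ)) volume 0 b := by
  have hrpow : IntervalIntegrable (fun ξ : ℝ => ξ ^ (-s)) volume 0 b :=
    intervalIntegral.intervalIntegrable_rpow' (by linarith)
  have hrpow_ofReal : IntervalIntegrable (fun ξ : ℝ => ((ξ ^ (-s) : ℝ) : ℂ)) volume 0 b :=
    ⟨hrpow.1.ofReal, hrpow.2.ofReal⟩
  rw [← Set.uIcc_of_le hb] at hg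
  exact (hrpow_ofReal.mul_continuousOn hg).mul_continuousOn (by fun_prop)

lemma norm_integral_rpow_neg_mul_mul_exp_le_of_le_inv_abs (hs1 : s < 1) (hb : 0 ≤ b)
    (hbx : b ≤ |x|⁻¹) (hgA : ∀ ξ ∈ Set.Icc 0 b, ‖g ξ‖ ≤ A) :
    ‖∫ ξ in (0 : ℝ)..b, ((ξ ^ (-s) : ℝ) : ℂ) * g ξ * exp (I * x * ξ)‖ ≤
      A / (1 - s) * |x| ^ (s - 1) := by
  have hA : 0 ≤ A := (norm_nonneg _).trans (hgA 0 (Set.left_mem_Icc.2 hb))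
  have : 0 < 1 - s := sub_pos.2 hs1
  have hbound : ∀ ξ ∈ Set.Ioc 0 b, ‖g ξ * exp (I * x * ξ)‖ ≤ A := fun ξ hξ => by
    rw [norm_mul, norm_exp_I_mul_mul, mul_one]
    exact hgA ξ (Set.Ioc_subset_Icc_self hξ)
  calc ‖∫ ξ in (0 : ℝ)..b, ((ξ ^ (-s) : ℝ) : ℂ) * g ξ * exp (I * x * ξ)‖
      ≤ A / (1 - s) * b ^ (1 - s) := by
        simpa only [mul_assoc, neg_add_eq_sub] using
          norm_integral_rpow_mul_le (p := -s) (by linarith) hb hbound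
    _ ≤ A / (1 - s) * (|x|⁻¹) ^ (1 - s) := by gcongr
    _ = A / (1 - s) * |x| ^ (s - 1) := by
        rw [Real.inv_rpow (abs_nonneg x), ← Real.rpow_neg (abs_nonneg x), neg_sub]

lemma abs_mul_norm_integral_rpow_neg_mul_mul_exp_le (hs : 0 ≤ s) (ha : 0 < a) (hab : a ≤ b)
    (hg : ContinuousOn g (Set.Icc a b)) (hgg' : ∀ ξ ∈ Set.Ioo a b, HasDerivAt g (g' ξ) ξ)
    (hg' : IntervalIntegrable g' volume a b) (hgA : ∀ ξ ∈ Set.Icc a b, ‖g ξ‖ ≤ A) :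
    |x| * ‖∫ ξ in a..b, ((ξ ^ (-s) : ℝ) : ℂ) * g ξ * exp (I * x * ξ)‖ ≤
      a ^ (-s) * (2 * A + ∫ ξ in a..b, ‖g' ξ‖) := by
  have hpos : ∀ ξ ∈ Set.Icc a b, 0 < ξ := fun ξ hξ => ha.trans_le hξ.1
  have hderiv : ∀ ξ ∈ Set.Icc a b, HasDerivAt (fun ξ => ξ ^ (-s)) (-s * ξ ^ (-s - 1)) ξ :=
    fun ξ hξ => Real.hasDerivAt_rpow_const (Or.inl (hpos ξ hξ).ne')
  exact abs_mul_norm_integral_weight_mul_exp_le hab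
    (fun ξ hξ => (hderiv ξ hξ).continuousAt.continuousWithinAt)
    (fun ξ hξ => hderiv ξ (Set.Ioo_subset_Icc_self hξ))
    (fun ξ hξ => mul_nonpos_of_nonpos_of_nonneg (neg_nonpos.2 hs)
      (Real.rpow_nonneg (hpos ξ (Set.Ioo_subset_Icc_self hξ)).le _))
    (Real.rpow_nonneg (ha.le.trans hab) _) hg hgg' hg' hgA

lemma norm_integral_rpow_neg_mul_mul_exp_le (hs : 0 ≤ s) (hs1 : s < 1) (hb : 0 ≤ b) (hx : x ≠ 0)
    (hg : ContinuousOn g (Set.Icc 0 b)) (hgg' : ∀ ξ ∈ Set.Ioo 0 b, HasDerivAt g (g' ξ) ξ)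
    (hg' : IntervalIntegrable g' volume 0 b) (hgA : ∀ ξ ∈ Set.Icc 0 b, ‖g ξ‖ ≤ A) :
    ‖∫ ξ in (0 : ℝ)..b, ((ξ ^ (-s) : ℝ) : ℂ) * g ξ * exp (I * x * ξ)‖ ≤
      (A / (1 - s) + 2 * A + ∫ ξ in (0 : ℝ)..b, ‖g' ξ‖) * |x| ^ (s - 1) := by
  have hA : 0 ≤ A := (norm_nonneg _).trans (hgA 0 (Set.left_mem_Icc.2 hb))
  have hvar : 0 ≤ ∫ ξ in (0 : ℝ)..b, ‖g' ξ‖ :=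
    intervalIntegral.integral_nonneg hb fun ξ _ => norm_nonneg _
  rcases le_total b |x|⁻¹ with hbx | hbx
  · refine (norm_integral_rpow_neg_mul_mul_exp_le_of_le_inv_abs hs1 hb hbx hgA).trans ?_
    gcongr
    linarith
  have hx' : 0 < |x| := abs_pos.2 hx
  have hr : 0 < |x|⁻¹ := inv_pos.2 hx'
  have hlow_sub : Set.Icc 0 |x|⁻¹ ⊆ Set.Icc 0 b := Set.Icc_subset_Icc_right hbx
  have hhigh_sub : Set.Icc |x|⁻¹ b ⊆ Set.Icc 0 b := Set.Icc_subset_Icc_left hr.le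
  have hint_low := intervalIntegrable_rpow_neg_mul_mul_exp (x := x) hs1 hr.le (hg.mono hlow_sub)
  have hint := intervalIntegrable_rpow_neg_mul_mul_exp (x := x) hs1 hb hg
  have hlow := norm_integral_rpow_neg_mul_mul_exp_le_of_le_inv_abs (x := x) hs1 hr.le le_rfl
    fun ξ hξ => hgA ξ (hlow_sub hξ)
  have hhigh : ‖∫ ξ in |x|⁻¹..b, ((ξ ^ (-s) : ℝ) : ℂ) * g ξ * exp (I * x * ξ)‖ ≤
      (2 * A + ∫ ξ in |x|⁻¹..b, ‖g' ξ‖) * |x| ^ (s - 1) := by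
    have h := abs_mul_norm_integral_rpow_neg_mul_mul_exp_le (x := x) hs hr hbx
      (hg.mono hhigh_sub) (fun ξ hξ => hgg' ξ ⟨hr.trans hξ.1, hξ.2⟩)
      (hg'.mono_set (by rwa [Set.uIcc_of_le hbx, Set.uIcc_of_le hb]))
      fun ξ hξ => hgA ξ (hhigh_sub hξ)
    rw [Real.inv_rpow hx'.le, Real.rpow_neg hx'.le, inv_inv, mul_comm (|x| ^ s)] at h
    rwa [Real.rpow_sub_one hx'.ne', mul_div_assoc', le_div_iff₀' hx']
  have hvar_high : ∫ ξ in |x|⁻¹..b, ‖g' ξ‖ ≤ ∫ ξ in (0 : ℝ)..b, ‖g' ξ‖ :=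
    intervalIntegral.integral_mono_interval hr.le hbx le_rfl
      (.of_forall fun ξ => norm_nonneg (g' ξ)) hg'.norm
  rw [← intervalIntegral.integral_add_adjacent_intervals hint_low (hint_low.symm.trans hint),
    add_assoc, add_mul]
  refine norm_add_le_of_le hlow (hhigh.trans ?_)
  gcongr

lemma exists_norm_integral_rpow_neg_mul_comp_rpow_mul_exp_le {α : ℝ} {ψ G : ℝ → ℂ}
    (hs : 0 ≤ s) (hs1 : s < 1) (hb : 0 ≤ b) (hα : 0 < α) (hψ : ContDiff ℝ 1 ψ)
    (hG : ContDiff ℝ 1 G) :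
    ∃ C, 0 ≤ C ∧ ∀ x : ℝ, x ≠ 0 →
      ‖∫ ξ in (0 : ℝ)..b, ((ξ ^ (-s) : ℝ) : ℂ) * (ψ ξ * G (ξ ^ α)) * exp (I * x * ξ)‖ ≤
        C * |x| ^ (s - 1) := by
  have hrpow : Continuous fun ξ : ℝ => ξ ^ α := Real.continuous_rpow_const hα.le
  have hψ' : Continuous (deriv ψ) := hψ.continuous_deriv le_rfl
  have hG' : Continuous (deriv G) := hG.continuous_deriv le_rfl
  have hg : Continuous fun ξ => ψ ξ * G (ξ ^ α) := hψ.continuous.mul (hG.continuous.comp hrpow)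
  have hgg' : ∀ ξ ∈ Set.Ioo 0 b, HasDerivAt (fun ξ => ψ ξ * G (ξ ^ α))
      (deriv ψ ξ * G (ξ ^ α) + ψ ξ * ((α * ξ ^ (α - 1)) • deriv G (ξ ^ α))) ξ := fun ξ hξ =>
    (hψ.differentiable one_ne_zero ξ).hasDerivAt.mul
      ((hG.differentiable one_ne_zero _).hasDerivAt.scomp ξ
        (Real.hasDerivAt_rpow_const (Or.inl hξ.1.ne')))
  have hg' : IntervalIntegrable
      (fun ξ => deriv ψ ξ * G (ξ ^ α) + ψ ξ * ((α * ξ ^ (α - 1)) • deriv G (ξ ^ α)))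
      volume 0 b := by
    have hrpow' : IntervalIntegrable (fun ξ : ℝ => α * ξ ^ (α - 1)) volume 0 b :=
      (intervalIntegral.intervalIntegrable_rpow' (by linarith)).const_mul α
    refine ((hψ'.mul (hG.continuous.comp hrpow)).intervalIntegrable 0 b).add ?_
    exact (hrpow'.smul_continuousOn (hG'.comp hrpow).continuousOn).continuousOn_mul
      hψ.continuous.continuousOn
  obtain ⟨A, hA⟩ := isCompact_Icc.exists_bound_of_continuousOn (s := Set.Icc 0 b) hg.continuousOn
  have hA0 : 0 ≤ A := (norm_nonneg _).trans (hA 0 (Set.left_mem_Icc.2 hb))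
  have : 0 < 1 - s := sub_pos.2 hs1
  refine ⟨_, ?_, fun x hx =>
    norm_integral_rpow_neg_mul_mul_exp_le hs hs1 hb hx hg.continuousOn hgg' hg' hA⟩
  exact add_nonneg (by positivity)
    (intervalIntegral.integral_nonneg hb fun ξ _ => norm_nonneg _)

lemma integral_eq_integral_add_integral_comp_neg {E : Type*} [NormedAddCommGroup E]
    [NormedSpace ℝ E] {f : ℝ → E} {R : ℝ}
    (hf : IntervalIntegrable f volume 0 R)
    (hf_neg : IntervalIntegrable (fun ξ => f (-ξ)) volume 0 R)
    (hsupp : ∀ ξ, R ≤ |ξ| → f ξ = 0) :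
    ∫ ξ, f ξ = (∫ ξ in (0 : ℝ)..R, f ξ) + ∫ ξ in (0 : ℝ)..R, f (-ξ) := by
  have hsub : Function.support f ⊆ Set.Ioc (-R) R := fun ξ hξ => by
    have hξR : |ξ| < R := not_le.1 fun h => hξ (hsupp ξ h)
    exact ⟨(abs_lt.1 hξR).1, (abs_lt.1 hξR).2.le⟩
  have hf_left : IntervalIntegrable f volume (-R) 0 := by
    rw [IntervalIntegrable.iff_comp_neg, neg_neg, neg_zero]
    exact hf_neg.symm
  rw [← intervalIntegral.integral_eq_integral_of_support_subset hsub,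
    ← intervalIntegral.integral_add_adjacent_intervals hf_left hf,
    intervalIntegral.integral_comp_neg, neg_zero, add_comm]

lemma integral_abs_rpow_neg_mul_comp_abs_eq_add {h χ : ℝ → ℂ} {R : ℝ} (hs1 : s < 1) (hR : 0 ≤ R)
    (hχ : Continuous χ) (hχ_supp : ∀ ξ, R ≤ |ξ| → χ ξ = 0) (hh : Continuous h) :
    ∫ ξ : ℝ, ((|ξ| ^ (-s) : ℝ) : ℂ) * χ ξ * h |ξ| * exp (I * x * ξ) =
      (∫ ξ in (0 : ℝ)..R, ((ξ ^ (-s) : ℝ) : ℂ) * (χ ξ * h ξ) * exp (I * x * ξ)) +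
        ∫ ξ in (0 : ℝ)..R, ((ξ ^ (-s) : ℝ) : ℂ) * (χ (-ξ) * h ξ) * exp (I * (-x : ℝ) * ξ) := by
  have hright : Set.EqOn (fun ξ : ℝ => ((ξ ^ (-s) : ℝ) : ℂ) * (χ ξ * h ξ) * exp (I * x * ξ))
      (fun ξ => ((|ξ| ^ (-s) : ℝ) : ℂ) * χ ξ * h |ξ| * exp (I * x * ξ)) (Set.uIcc 0 R) :=
    fun ξ hξ => by
      rw [Set.uIcc_of_le hR] at hξ
      simp only [abs_of_nonneg hξ.1, mul_assoc]
  have hleft : Set.EqOn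
      (fun ξ : ℝ => ((ξ ^ (-s) : ℝ) : ℂ) * (χ (-ξ) * h ξ) * exp (I * (-x : ℝ) * ξ))
      (fun ξ => ((|-ξ| ^ (-s) : ℝ) : ℂ) * χ (-ξ) * h |-ξ| * exp (I * x * (-ξ : ℝ)))
      (Set.uIcc 0 R) := fun ξ hξ => by
    rw [Set.uIcc_of_le hR] at hξ
    simp only [abs_neg, abs_of_nonneg hξ.1, mul_assoc, ofReal_neg, neg_mul, mul_neg]
  rw [intervalIntegral.integral_congr hright, intervalIntegral.integral_congr hleft]
  refine integral_eq_integral_add_integral_comp_neg ?_ ?_ fun ξ hξ => by simp [hχ_supp ξ hξ]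
  · exact .congr (hright.mono Set.uIoc_subset_uIcc)
      (intervalIntegrable_rpow_neg_mul_mul_exp hs1 hR (by fun_prop))
  · exact .congr (hleft.mono Set.uIoc_subset_uIcc)
      (intervalIntegrable_rpow_neg_mul_mul_exp hs1 hR (by fun_prop))

theorem exists_norm_integral_abs_rpow_neg_mul_comp_abs_rpow_mul_exp_le {α : ℝ} {χ G : ℝ → ℂ}
    (hs : 0 ≤ s) (hs1 : s < 1) (hα : 0 < α) (hχ : ContDiff ℝ 1 χ) (hχ_supp : HasCompactSupport χ)
    (hG : ContDiff ℝ 1 G) :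
    ∃ C, 0 < C ∧ ∀ x : ℝ, x ≠ 0 →
      ‖∫ ξ : ℝ, ((|ξ| ^ (-s) : ℝ) : ℂ) * χ ξ * G (|ξ| ^ α) * exp (I * x * ξ)‖ ≤
        C * |x| ^ (s - 1) := by
  obtain ⟨R, hR, hχR⟩ := hχ_supp.exists_pos_le_norm
  obtain ⟨C₁, hC₁, hright⟩ :=
    exists_norm_integral_rpow_neg_mul_comp_rpow_mul_exp_le hs hs1 hR.le hα hχ hG
  obtain ⟨C₂, hC₂, hleft⟩ := exists_norm_integral_rpow_neg_mul_comp_rpow_mul_exp_le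
    hs hs1 hR.le hα (hχ.comp contDiff_neg) hG
  refine ⟨C₁ + C₂ + 1, by positivity, fun x hx => ?_⟩
  rw [integral_abs_rpow_neg_mul_comp_abs_eq_add (h := fun t => G (t ^ α)) hs1 hR.le hχ.continuous
    hχR (hG.continuous.comp (Real.continuous_rpow_const hα.le))]
  calc _ ≤ C₁ * |x| ^ (s - 1) + C₂ * |-x| ^ (s - 1) :=
        norm_add_le_of_le (hright x hx) (hleft (-x) (neg_ne_zero.2 hx))
    _ ≤ (C₁ + C₂ + 1) * |x| ^ (s - 1) := by
        rw [abs_neg, ← add_mul]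
        exact mul_le_mul_of_nonneg_right (by linarith) (by positivity)

end OscillatoryIntegral

lemma rpow_mul_exp_neg_le_Gamma {T y : ℝ} (hT : 0 ≤ T) (hy : 0 ≤ y) :
    T ^ y * Real.exp (-T) ≤ Real.Gamma (y + 1) := by
  have hint : IntegrableOn (fun t : ℝ => Real.exp (-t) * t ^ y) (Set.Ioi 0) := by
    simpa using Real.GammaIntegral_convergent (s := y + 1) (by linarith)
  calc T ^ y * Real.exp (-T) = ∫ t in Set.Ioi T, Real.exp (-t) * T ^ y := by
        rw [integral_mul_const, integral_exp_neg_Ioi, mul_comm]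
    _ ≤ ∫ t in Set.Ioi T, Real.exp (-t) * t ^ y := by
        refine setIntegral_mono_on ((integrableOn_exp_neg_Ioi T).mul_const _)
          (hint.mono_set (Set.Ioi_subset_Ioi hT)) measurableSet_Ioi fun t ht => ?_
        have : T ≤ t := (Set.mem_Ioi.1 ht).le
        gcongr
    _ ≤ ∫ t in Set.Ioi (0 : ℝ), Real.exp (-t) * t ^ y := by
        refine setIntegral_mono_set hint ?_ (Set.Ioi_subset_Ioi hT).eventuallyLE
        filter_upwards [ae_restrict_mem measurableSet_Ioi] with t ht
        have : 0 < t := ht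
        positivity
    _ = Real.Gamma (y + 1) := by
        rw [Real.Gamma_eq_integral (by linarith)]
        simp only [add_sub_cancel_right]

lemma summable_pow_div_Gamma {β : ℝ} (hβ : 0 < β) {ρ : ℝ} (hρ : 0 ≤ ρ) :
    Summable fun k : ℕ => ρ ^ k / Real.Gamma (β * k + 1) := by
  -- Since `T ^ β = 2 * ρ + 1`, the lower bound `T ^ (β * k) * exp (-T)` for `Γ (β * k + 1)`
  -- outgrows `ρ ^ k` by a factor `2 ^ k`.
  set T : ℝ := (2 * ρ + 1) ^ β⁻¹ with hTdef
  have hT : 0 < T := by positivity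
  have hTpow (k : ℕ) : T ^ (β * k) = (2 * ρ + 1) ^ k := by
    rw [Real.rpow_mul_natCast hT.le, hTdef, Real.rpow_inv_rpow (by positivity) hβ.ne']
  refine Summable.of_nonneg_of_le (fun k => ?_) (fun k => ?_)
    (summable_geometric_two.mul_left (Real.exp T))
  · exact div_nonneg (by positivity) (Real.Gamma_pos_of_pos (by positivity)).le
  · have hGamma := rpow_mul_exp_neg_le_Gamma hT.le (y := β * k) (by positivity)
    rw [hTpow] at hGamma
    calc ρ ^ k / Real.Gamma (β * k + 1)
        ≤ ((2 * ρ + 1) / 2) ^ k / ((2 * ρ + 1) ^ k * Real.exp (-T)) := by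
          gcongr
          linarith
      _ = Real.exp T * (1 / 2) ^ k := by
          rw [Real.exp_neg, div_pow, one_div, inv_pow]
          field_simp

lemma differentiable_mlE {β : ℝ} (hβ : 0 < β) : Differentiable ℂ (mlE β) := fun z => by
  have hdiff : DifferentiableOn ℂ (mlE β) (Metric.ball 0 (‖z‖ + 1)) := by
    refine differentiableOn_tsum_of_summable_norm
      (summable_pow_div_Gamma hβ (by positivity : 0 ≤ ‖z‖ + 1)) (fun k => by fun_prop)
      Metric.isOpen_ball fun k w hw => ?_
    have hGamma : 0 < Real.Gamma (β * k + 1) := Real.Gamma_pos_of_pos (by positivity)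
    rw [norm_div, norm_pow, norm_real, Real.norm_of_nonneg hGamma.le]
    gcongr
    exact (mem_ball_zero_iff.mp hw).le
  exact hdiff.differentiableAt (Metric.isOpen_ball.mem_nhds (by simp))

lemma contDiff_mlE_mul_ofReal {β : ℝ} (hβ : 0 < β) (c : ℂ) :
    ContDiff ℝ 1 fun t : ℝ => mlE β (c * t) :=
  ((differentiable_mlE hβ).contDiff.restrict_scalars ℝ).comp
    (contDiff_const.mul ofRealCLM.contDiff)

lemma hasCompactSupport_of_abs_rpow {E : Type*} [Zero E] {f : ℝ → E} {K σ : ℝ} (hσ : 0 < σ)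
    (hf : ∀ ξ, K < |ξ| ^ σ → f ξ = 0) : HasCompactSupport f := by
  have hlarge : ∀ᶠ t : ℝ in Filter.atTop, K < t ^ σ :=
    (tendsto_rpow_atTop hσ).eventually_gt_atTop K
  obtain ⟨R, hR⟩ := Filter.eventually_atTop.1 hlarge
  refine HasCompactSupport.intro (isCompact_Icc (a := -R) (b := R)) fun ξ hξ => hf ξ (hR _ ?_)
  exact (not_le.1 fun h => hξ (abs_le.1 h)).le

theorem stmt18_general {α β s : ℝ} (hβ : 0 < β) (hα : 0 < α) (hs : 0 ≤ s) (hs1 : s < 1) (c : ℂ)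
    {χ : ℝ → ℂ} (hχ : ContDiff ℝ 1 χ) (hχ_supp : HasCompactSupport χ) :
    ∃ C : ℝ, 0 < C ∧ ∀ x : ℝ, x ≠ 0 →
      ‖∫ ξ : ℝ, ((|ξ| ^ (-s) : ℝ) : ℂ) * χ ξ * mlE β (c * ((|ξ| ^ α : ℝ) : ℂ))
          * exp (I * x * ξ)‖ ≤ C * |x| ^ (s - 1) :=
  exists_norm_integral_abs_rpow_neg_mul_comp_abs_rpow_mul_exp_le
    (G := fun t : ℝ => mlE β (c * t)) hs hs1 hα hχ hχ_supp (contDiff_mlE_mul_ofReal hβ c)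

/-- Kernel decay for the low-frequency Mittag-Leffler kernel:
`𝒰₁(x) = ∫ |ξ|^{-s} χ(ξ) E_β(i^{-β}|ξ|^α) e^{ixξ} dξ` satisfies
`|𝒰₁(x)| ≲_s |x|^{s-1}` for `x ≠ 0`, where `χ` is a smooth cutoff supported in
`{|ξ|^σ ≤ 2M}` and equal to `1` on `{|ξ|^σ ≤ M}`, `σ = α/β`. -/
theorem stmt18 (β α M s : ℝ) (hβ : β ∈ Set.Ioo (1/2 : ℝ) 1) (hα : 0 < α)
    (hM : 0 < M) (hs : 0 ≤ s) (hs1 : s < 1)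
    (χ : ℝ → ℝ) (hχ : ContDiff ℝ (⊤ : ℕ∞) χ)
    (hsupp : ∀ ξ : ℝ, 2*M < |ξ| ^ (α/β) → χ ξ = 0)
    (hone : ∀ ξ : ℝ, |ξ| ^ (α/β) ≤ M → χ ξ = 1) :
    ∃ C : ℝ, 0 < C ∧ ∀ x : ℝ, x ≠ 0 →
      ‖∫ ξ : ℝ, ((|ξ| ^ (-s) : ℝ) : ℂ) * ((χ ξ : ℝ) : ℂ)
          * mlE β (Complex.I ^ (-(β:ℂ)) * ((|ξ| ^ α : ℝ) : ℂ))
          * Complex.exp (Complex.I * (x : ℂ) * (ξ : ℂ))‖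
        ≤ C * |x| ^ (s - 1) := by
  have hβ0 : 0 < β := one_half_pos.trans hβ.1
  exact stmt18_general hβ0 hα hs hs1 _ (ofRealCLM.contDiff.comp (hχ.of_le (by simp)))
    ((hasCompactSupport_of_abs_rpow (div_pos hα hβ0) hsupp).comp_left ofReal_zero)
end
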